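/- There exists a constant c < 1 such that for every ε > 0 there exists N with f_125(n) ≤ c · (1 + ε) · C(n, 62) for all n ≥ N, where C(n, k) denotes the binomial coefficient. -/

import Mathlib

/-- A complete `r`-partite `r`-graph (a "block") on a finite vertex set `V ⊆ ℕ`:
it is determined by `r` pairwise disjoint nonempty subsets of `V`. -/
structure Block (V : Finset ℕ) (r : ℕ) where
  parts : Fin r → Finset ℕ
  nonempty : ∀ i, (parts i).Nonempty
  subset : ∀ i, parts i ⊆ V
  disj : ∀ i j, i ≠ j → Disjoint (parts i) (parts j)

/-- The edge set of a block: all sets contained in the union of the parts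
meeting each part in exactly one vertex. -/
def Block.edges {V : Finset ℕ} {r : ℕ} (B : Block V r) : Set (Finset ℕ) :=
  {X | (∀ i, (X ∩ B.parts i).card = 1) ∧ ∀ x ∈ X, ∃ i, x ∈ B.parts i}

/-- `ExactCover V r k F` : there are `k` complete `r`-partite `r`-graphs on `V`
whose edge sets are pairwise disjoint and whose union is the family `F`. -/
def ExactCover (V : Finset ℕ) (r k : ℕ) (F : Set (Finset ℕ)) : Prop :=
  ∃ B : Fin k → Block V r,
    (∀ i j, i ≠ j → Disjoint (B i).edges (B j).edges) ∧
    (⋃ i, (B i).edges) = F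

/-- `f r n` : the minimum number of complete `r`-partite `r`-graphs needed to
partition the edge set of the complete `r`-uniform hypergraph on `[n]`. -/
noncomputable def f (r n : ℕ) : ℕ :=
  sInf {k | ExactCover (Finset.range n) r k
    {X | X ⊆ Finset.range n ∧ X.card = r}}

/-- The edge set of the complete multipartite hypergraph with the (possibly empty) parts `P`. -/
def partEdges {α : Type} (P : α → Finset ℕ) : Set (Finset ℕ) :=
  {X | (∀ i, (X ∩ P i).card = 1) ∧ ∀ x ∈ X, ∃ i, x ∈ P i}

/-- `IsBlock V r E`: the family `E` is the edge set of a complete `r`-partite `r`-graph on `V`,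
where empty parts are allowed. -/
def IsBlock (V : Finset ℕ) (r : ℕ) (E : Set (Finset ℕ)) : Prop :=
  ∃ (α : Type) (_ : Fintype α) (P : α → Finset ℕ), Fintype.card α = r ∧ (∀ i, P i ⊆ V) ∧
    (∀ i j, i ≠ j → Disjoint (P i) (P j)) ∧ E = partEdges P

/-- `HasCover V r F k`: the family `F` is partitioned by at most `k` complete `r`-partite
`r`-graphs on `V`, where empty parts are allowed. -/
def HasCover (V : Finset ℕ) (r : ℕ) (F : Set (Finset ℕ)) (k : ℕ) : Prop :=
  ∃ (ι : Type) (_ : Fintype ι) (E : ι → Set (Finset ℕ)), Fintype.card ι ≤ k ∧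
    (∀ i, IsBlock V r (E i)) ∧ (∀ X ∈ F, ∃! i, X ∈ E i) ∧ ∀ i, E i ⊆ F

/-- All `r`-element subsets of `V`. -/
def layer (V : Finset ℕ) (r : ℕ) : Set (Finset ℕ) := {X | X ⊆ V ∧ X.card = r}

/-- The product of a family on `V` and a family on `W`. -/
def famProd (V W : Finset ℕ) (F G : Set (Finset ℕ)) : Set (Finset ℕ) :=
  {X | X ⊆ V ∪ W ∧ X ∩ V ∈ F ∧ X ∩ W ∈ G}

theorem IsBlock.mono {V V' : Finset ℕ} {r : ℕ} {E : Set (Finset ℕ)} (h : IsBlock V r E)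
    (hV : V ⊆ V') : IsBlock V' r E := by
  obtain ⟨α, hα, P, hc, hP, hd, hE⟩ := h
  exact ⟨α, hα, P, hc, fun i => (hP i).trans hV, hd, hE⟩

theorem IsBlock.prod {V W : Finset ℕ} {r s : ℕ} {E F : Set (Finset ℕ)} (hVW : Disjoint V W)
    (hE : IsBlock V r E) (hF : IsBlock W s F) : IsBlock (V ∪ W) (r + s) (famProd V W E F) := by
  obtain ⟨α, hα, P, hcα, hP, hdP, rfl⟩ := hE
  obtain ⟨β, hβ, Q, hcβ, hQ, hdQ, rfl⟩ := hF
  have hPQ : ∀ i j, Disjoint (P i) (Q j) := fun i j =>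
    Finset.disjoint_of_subset_left (hP i) (Finset.disjoint_of_subset_right (hQ j) hVW)
  refine ⟨α ⊕ β, inferInstance, Sum.elim P Q, by simp [hcα, hcβ], ?_, ?_, ?_⟩
  · rintro (i | i)
    · exact (hP i).trans Finset.subset_union_left
    · exact (hQ i).trans Finset.subset_union_right
  · rintro (i | i) (j | j) hij
    · exact hdP i j (by simpa using hij)
    · exact hPQ i j
    · exact (hPQ j i).symm
    · exact hdQ i j (by simpa using hij)
  · have e1 : ∀ (X : Finset ℕ) i, X ∩ V ∩ P i = X ∩ P i := fun X i => by
      rw [Finset.inter_assoc, Finset.inter_eq_right.2 (hP i)]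
    have e2 : ∀ (X : Finset ℕ) i, X ∩ W ∩ Q i = X ∩ Q i := fun X i => by
      rw [Finset.inter_assoc, Finset.inter_eq_right.2 (hQ i)]
    ext X
    simp only [famProd, partEdges, Set.mem_ofPred_eq, e1, e2, Sum.forall, Sum.exists, Sum.elim_inl,
      Sum.elim_inr, Finset.mem_inter]
    constructor
    · rintro ⟨hX, ⟨h1, h2⟩, h3, h4⟩
      refine ⟨⟨h1, h3⟩, fun x hx => ?_⟩
      rcases Finset.mem_union.1 (hX hx) with h | h
      · exact Or.inl (h2 x ⟨hx, h⟩)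
      · exact Or.inr (h4 x ⟨hx, h⟩)
    · rintro ⟨⟨h1, h3⟩, h⟩
      refine ⟨fun x hx => ?_, ⟨h1, ?_⟩, h3, ?_⟩
      · rcases h x hx with ⟨i, hi⟩ | ⟨i, hi⟩
        · exact Finset.mem_union_left _ (hP i hi)
        · exact Finset.mem_union_right _ (hQ i hi)
      · rintro x ⟨hx, hxV⟩
        refine (h x hx).resolve_right ?_
        rintro ⟨i, hi⟩
        exact Finset.disjoint_left.1 hVW hxV (hQ i hi)
      · rintro x ⟨hx, hxW⟩
        refine (h x hx).resolve_left ?_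
        rintro ⟨i, hi⟩
        exact Finset.disjoint_left.1 hVW (hP i hi) hxW

theorem isBlock_empty (V : Finset ℕ) : IsBlock V 0 {∅} := by
  refine ⟨Empty, inferInstance, fun _ => ∅, by simp, by simp, by simp, ?_⟩
  ext X
  simp [partEdges, Finset.eq_empty_iff_forall_notMem]

theorem isBlock_layer_one (V : Finset ℕ) : IsBlock V 1 (layer V 1) := by
  refine ⟨Unit, inferInstance, fun _ => V, by simp, by simp, by simp, ?_⟩
  ext X
  simp only [layer, partEdges, Set.mem_ofPred_eq, forall_const, exists_const]
  constructor
  · rintro ⟨h, h1⟩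
    exact ⟨by rw [Finset.inter_eq_left.2 h, h1], h⟩
  · rintro ⟨h1, h⟩
    refine ⟨h, ?_⟩
    rwa [Finset.inter_eq_left.2 h] at h1

theorem HasCover.mono {V V' : Finset ℕ} {r k k' : ℕ} {F : Set (Finset ℕ)} (h : HasCover V r F k)
    (hV : V ⊆ V') (hk : k ≤ k') : HasCover V' r F k' := by
  obtain ⟨ι, hι, E, hc, hE, h⟩ := h
  exact ⟨ι, hι, E, hc.trans hk, fun i => (hE i).mono hV, h⟩

theorem IsBlock.hasCover {V : Finset ℕ} {r : ℕ} {E : Set (Finset ℕ)} (h : IsBlock V r E) :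
    HasCover V r E 1 :=
  ⟨Unit, inferInstance, fun _ => E, by simp, fun _ => h, fun X hX => ⟨(), hX, fun _ _ => rfl⟩,
    fun _ => subset_rfl⟩

theorem HasCover.iUnion {V : Finset ℕ} {r : ℕ} {J : Type} [Fintype J] {F : J → Set (Finset ℕ)}
    {k : J → ℕ} (hd : ∀ X i j, X ∈ F i → X ∈ F j → i = j) (h : ∀ j, HasCover V r (F j) (k j)) :
    HasCover V r (⋃ j, F j) (∑ j, k j) := by
  choose ι hι E hc hE hu hs using h
  refine ⟨Σ j, ι j, inferInstance, fun p => E p.1 p.2, ?_, fun p => hE p.1 p.2, ?_, ?_⟩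
  · rw [Fintype.card_sigma]
    exact Finset.sum_le_sum fun j _ => hc j
  · intro X hX
    obtain ⟨j, hj⟩ := Set.mem_iUnion.1 hX
    obtain ⟨i, hi, hi'⟩ := hu j X hj
    refine ⟨⟨j, i⟩, hi, ?_⟩
    rintro ⟨j', i'⟩ h'
    obtain rfl := hd X j' j (hs j' i' h') hj
    rw [hi' i' h']
  · rintro ⟨j, i⟩
    exact (hs j i).trans (Set.subset_iUnion F j)

theorem HasCover.union {V : Finset ℕ} {r k l : ℕ} {F G : Set (Finset ℕ)}
    (hd : ∀ X, X ∈ F → X ∉ G) (hF : HasCover V r F k) (hG : HasCover V r G l) :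
    HasCover V r (F ∪ G) (k + l) := by
  have := HasCover.iUnion (V := V) (r := r) (J := Bool) (F := fun b => cond b F G)
    (k := fun b => cond b k l) ?_ ?_
  · rwa [← Set.union_eq_iUnion, Fintype.sum_bool] at this
  · rintro X (_ | _) (_ | _) h1 h2
    · rfl
    · exact absurd h1 (hd X h2)
    · exact absurd h2 (hd X h1)
    · rfl
  · rintro (_ | _)
    · exact hG
    · exact hF

theorem HasCover.prod {V W : Finset ℕ} {r s k l : ℕ} {F G : Set (Finset ℕ)} (hVW : Disjoint V W)
    (hF : HasCover V r F k) (hG : HasCover W s G l) :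
    HasCover (V ∪ W) (r + s) (famProd V W F G) (k * l) := by
  obtain ⟨ι, _, E, hc, hE, hu, hs⟩ := hF
  obtain ⟨κ, _, E', hc', hE', hu', hs'⟩ := hG
  refine ⟨ι × κ, inferInstance, fun p => famProd V W (E p.1) (E' p.2), ?_,
    fun p => (hE p.1).prod hVW (hE' p.2), ?_, ?_⟩
  · rw [Fintype.card_prod]
    exact Nat.mul_le_mul hc hc'
  · rintro X ⟨hX, h1, h2⟩
    obtain ⟨i, hi, hi'⟩ := hu _ h1
    obtain ⟨j, hj, hj'⟩ := hu' _ h2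
    refine ⟨(i, j), ⟨hX, hi, hj⟩, ?_⟩
    rintro ⟨i', j'⟩ ⟨-, h3, h4⟩
    rw [hi' i' h3, hj' j' h4]
  · rintro ⟨i, j⟩ X ⟨hX, h1, h2⟩
    exact ⟨hX, hs i h1, hs' j h2⟩

/-- Restricting a cover to `range n` and discarding the blocks which become empty. -/
theorem f_le_of_hasCover {V : Finset ℕ} {r n k : ℕ} (hn : Finset.range n ⊆ V)
    (h : HasCover V r (layer V r) k) : f r n ≤ k := by
  classical
  obtain ⟨ι, _, E, hc, hE, hu, hs⟩ := h
  let J := {i : ι // ∃ X ∈ E i, X ⊆ Finset.range n}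
  have hJ : Fintype.card J ≤ k := (Fintype.card_subtype_le _).trans hc
  let e : Fin (Fintype.card J) ≃ J := (Fintype.equivFin J).symm
  have hB : ∀ j : J, ∃ B : Block (Finset.range n) r,
      B.edges = {X | X ∈ E j.1 ∧ X ⊆ Finset.range n} := by
    rintro ⟨i, Y, hY, hYn⟩
    obtain ⟨α, _, P, hcα, hP, hd, hEP⟩ := hE i
    let u : Fin r ≃ α := (Fintype.equivFinOfCardEq hcα).symm
    refine ⟨⟨fun a => P (u a) ∩ Finset.range n, fun a => ?_, fun a => Finset.inter_subset_right,
      fun a b hab => ?_⟩, ?_⟩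
    · rw [hEP] at hY
      obtain ⟨x, hx⟩ := Finset.card_pos.1 (by rw [hY.1 (u a)]; exact one_pos)
      rw [Finset.mem_inter] at hx
      exact ⟨x, Finset.mem_inter.2 ⟨hx.2, hYn hx.1⟩⟩
    · exact Finset.disjoint_of_subset_left Finset.inter_subset_left
        (Finset.disjoint_of_subset_right Finset.inter_subset_left
          (hd _ _ (fun h => hab (u.injective h))))
    · ext X
      simp only [Block.edges, hEP, partEdges, Set.mem_ofPred_eq, Finset.mem_inter]
      constructor
      · rintro ⟨h1, h2⟩
        have hX : X ⊆ Finset.range n := fun x hx => (h2 x hx).choose_spec.2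
        refine ⟨⟨fun a => ?_, fun x hx => ?_⟩, hX⟩
        · have := h1 (u.symm a)
          rwa [Equiv.apply_symm_apply, Finset.inter_comm (P a), ← Finset.inter_assoc,
            Finset.inter_eq_left.2 hX] at this
        · obtain ⟨a, ha, -⟩ := h2 x hx
          exact ⟨u a, ha⟩
      · rintro ⟨⟨h1, h2⟩, hX⟩
        refine ⟨fun a => ?_, fun x hx => ?_⟩
        · rw [Finset.inter_comm (P _), ← Finset.inter_assoc, Finset.inter_eq_left.2 hX]
          exact h1 _
        · obtain ⟨a, ha⟩ := h2 x hx
          exact ⟨u.symm a, by rwa [Equiv.apply_symm_apply], hX hx⟩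
  choose B hB using hB
  refine (Nat.sInf_le ?_).trans hJ
  refine ⟨fun a => B (e a), fun a b hab => ?_, ?_⟩
  · rw [hB, hB, Set.disjoint_left]
    rintro X ⟨h1, -⟩ ⟨h2, -⟩
    have := (hu X (hs _ h1)).unique h1 h2
    exact hab (e.injective (Subtype.ext this))
  · ext X
    simp only [hB, Set.mem_iUnion, Set.mem_ofPred_eq]
    constructor
    · rintro ⟨a, h1, h2⟩
      exact ⟨h2, (hs _ h1).2⟩
    · rintro ⟨h1, h2⟩
      obtain ⟨i, hi, -⟩ := hu X ⟨h1.trans hn, h2⟩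
      exact ⟨e.symm ⟨i, X, hi, h1⟩, by simpa using hi, h1⟩

theorem HasCover.of_eq {V : Finset ℕ} {r k r' k' : ℕ} {F G : Set (Finset ℕ)}
    (h : HasCover V r F k) (hr : r = r') (hk : k ≤ k') (hF : ∀ X, X ∈ G ↔ X ∈ F) :
    HasCover V r' G k' := by
  subst hr
  obtain rfl : G = F := Set.ext hF
  exact h.mono subset_rfl hk

theorem hasCover_empty (V : Finset ℕ) (r : ℕ) : HasCover V r ∅ 0 :=
  ⟨Empty, inferInstance, Empty.elim, by simp, fun i => i.elim, fun X hX => hX.elim,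
    fun i => i.elim⟩

theorem card_inter_union {V W X : Finset ℕ} (hVW : Disjoint V W) (hX : X ⊆ V ∪ W) :
    X.card = (X ∩ V).card + (X ∩ W).card := by
  rw [← Finset.card_union_of_disjoint, ← Finset.inter_union_distrib_left, Finset.inter_eq_left.2 hX]
  exact Finset.disjoint_of_subset_left Finset.inter_subset_right
    (Finset.disjoint_of_subset_right Finset.inter_subset_right hVW)

theorem mem_famProd_layer {V W X : Finset ℕ} {r s : ℕ} :
    X ∈ famProd V W (layer V r) (layer W s) ↔
      X ⊆ V ∪ W ∧ (X ∩ V).card = r ∧ (X ∩ W).card = s := by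
  simp [famProd, layer]

theorem hasCover_card_inter_le_one (V : Finset ℕ) : ∀ (U : Finset ℕ) (r : ℕ), Disjoint U V →
    HasCover (U ∪ V) r {X | X ⊆ U ∪ V ∧ X.card = r ∧ (X ∩ U).card ≤ 1}
      (V.card.choose (r / 2)) := by
  induction V using Finset.induction_on with
  | empty =>
    intro U r _
    match r with
    | 0 =>
      refine (isBlock_empty _).hasCover.of_eq rfl (by simp) fun X => ?_
      simp only [Set.mem_ofPred_eq, Finset.card_eq_zero, Set.mem_singleton_iff]
      exact ⟨fun h => h.2.1, by rintro rfl; simp⟩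
    | 1 =>
      refine (isBlock_layer_one _).hasCover.of_eq rfl (by simp) fun X => ?_
      simp only [Set.mem_ofPred_eq, layer]
      exact ⟨fun h => ⟨h.1, h.2.1⟩, fun h => ⟨h.1, h.2, h.2 ▸ Finset.card_le_card
        Finset.inter_subset_left⟩⟩
    | r + 2 =>
      refine (hasCover_empty _ _).of_eq rfl (Nat.zero_le _) fun X => ?_
      simp only [Set.mem_ofPred_eq, Set.mem_empty_iff_false, iff_false, Finset.union_empty]
      rintro ⟨h1, h2, h3⟩
      rw [Finset.inter_eq_left.2 h1] at h3
      omega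
  | insert v V hv ih =>
    intro U r hd
    match r with
    | 0 =>
      refine (isBlock_empty _).hasCover.of_eq rfl (by simp) fun X => ?_
      simp only [Set.mem_ofPred_eq, Finset.card_eq_zero, Set.mem_singleton_iff]
      exact ⟨fun h => h.2.1, by rintro rfl; simp⟩
    | 1 =>
      refine (isBlock_layer_one _).hasCover.of_eq rfl (by simp) fun X => ?_
      simp only [Set.mem_ofPred_eq, layer]
      exact ⟨fun h => ⟨h.1, h.2.1⟩, fun h => ⟨h.1, h.2, h.2 ▸ Finset.card_le_card
        Finset.inter_subset_left⟩⟩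
    | r + 2 =>
      obtain ⟨hvU, hUV⟩ : v ∉ U ∧ Disjoint U V := by
        rw [Finset.disjoint_insert_right] at hd
        exact hd
      have hdv : Disjoint U {v} := by simpa using hvU
      have hdV : Disjoint (U ∪ {v}) V := by
        rw [Finset.disjoint_union_left]
        exact ⟨hUV, by simpa using hv⟩
      have hun : U ∪ insert v V = (U ∪ {v}) ∪ V := by
        rw [Finset.insert_eq, Finset.union_assoc]
      have hV : HasCover V r (layer V r) (V.card.choose (r / 2)) := by
        have := ih ∅ r (Finset.disjoint_empty_left _)
        rw [Finset.empty_union] at this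
        refine this.of_eq rfl le_rfl fun X => ?_
        simp [layer]
      have h1 := (((isBlock_layer_one U).prod hdv (isBlock_layer_one {v})).hasCover).prod hdV hV
      have h2 := ih (U ∪ {v}) (r + 2) hdV
      have key : ∀ X : Finset ℕ, X ⊆ (U ∪ {v}) ∪ V →
          (X ∩ (U ∪ {v})).card = (X ∩ U).card + (X ∩ {v}).card ∧
          X.card = (X ∩ (U ∪ {v})).card + (X ∩ V).card := by
        intro X hX
        refine ⟨?_, card_inter_union hdV hX⟩
        rw [card_inter_union hdv (Finset.inter_subset_right : X ∩ (U ∪ {v}) ⊆ _),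
          Finset.inter_assoc, Finset.inter_assoc,
          Finset.inter_eq_right.2 Finset.subset_union_left,
          Finset.inter_eq_right.2 Finset.subset_union_right]
      have hv1 : ∀ X : Finset ℕ, (X ∩ {v}).card ≤ 1 := fun X =>
        (Finset.card_le_card Finset.inter_subset_right).trans (by simp)
      have hmem : ∀ X : Finset ℕ, X ∈ famProd (U ∪ {v}) V
          (famProd U {v} (layer U 1) (layer {v} 1)) (layer V r) ↔
          X ⊆ (U ∪ {v}) ∪ V ∧ ((X ∩ U).card = 1 ∧ (X ∩ {v}).card = 1) ∧ (X ∩ V).card = r := by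
        intro X
        simp only [famProd, layer, Set.mem_ofPred_eq, Finset.inter_assoc, Finset.inter_subset_right,
          Finset.inter_eq_right.2 (Finset.subset_union_left : U ⊆ U ∪ {v}),
          Finset.inter_eq_right.2 (Finset.subset_union_right : {v} ⊆ U ∪ {v}), true_and]
      have h3 := HasCover.union (V := (U ∪ {v}) ∪ V) ?_
        (h1.of_eq (show 1 + 1 + r = r + 2 by omega) le_rfl fun X => Iff.rfl) h2
      · rw [hun]
        refine h3.of_eq rfl ?_ fun X => ?_
        · rw [Finset.card_insert_of_notMem hv, one_mul,
            show (r + 2) / 2 = r / 2 + 1 by omega, Nat.choose_succ_succ]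
        · rw [Set.mem_union, hmem]
          simp only [Set.mem_ofPred_eq]
          constructor
          · rintro ⟨hX, h4, h5⟩
            have := key X hX
            have := hv1 X
            by_cases h6 : (X ∩ (U ∪ {v})).card ≤ 1
            · exact Or.inr ⟨hX, h4, h6⟩
            · exact Or.inl ⟨hX, by omega, by omega⟩
          · rintro (⟨hX, h4, h5⟩ | ⟨hX, h4, h5⟩)
            · have := key X hX
              exact ⟨hX, by omega, by omega⟩
            · have := key X hX
              exact ⟨hX, h4, by omega⟩
      · intro X hX hX'
        rw [hmem] at hX
        have := key X hX.1
        have := hX'.2.2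
        omega

/-- The classical upper bound `(|V| choose ⌊r / 2⌋)`. -/
theorem hasCover_layer (V : Finset ℕ) (r : ℕ) :
    HasCover V r (layer V r) (V.card.choose (r / 2)) := by
  have := hasCover_card_inter_le_one V ∅ r (Finset.disjoint_empty_left _)
  rw [Finset.empty_union] at this
  refine this.of_eq rfl le_rfl fun X => ?_
  simp [layer]

/-- The pairs joining `A` to `B`. -/
def joinPairs (A B : Finset ℕ) : Set (Finset ℕ) := {X | ∃ x ∈ A, ∃ y ∈ B, X = {x, y}}

/-- The pairs joining two different members of the family `Q`, that is, the edges of the blow-up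
of a complete graph. -/
def crossPairs {q : ℕ} (Q : Fin q → Finset ℕ) : Set (Finset ℕ) :=
  {X | ∃ i j, i ≠ j ∧ ∃ x ∈ Q i, ∃ y ∈ Q j, X = {x, y}}

theorem isBlock_joinPairs {V A B : Finset ℕ} (hA : A ⊆ V) (hB : B ⊆ V) (hAB : Disjoint A B) :
    IsBlock V 2 (joinPairs A B) := by
  have h := ((isBlock_layer_one A).prod hAB (isBlock_layer_one B)).mono (Finset.union_subset hA hB)
  convert h using 1
  ext X
  rw [mem_famProd_layer]
  constructor
  · rintro ⟨x, hx, y, hy, rfl⟩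
    have hx' := Finset.disjoint_left.1 hAB hx
    have hy' := Finset.disjoint_right.1 hAB hy
    refine ⟨?_, ?_, ?_⟩
    · simp [Finset.insert_subset_iff, hx, hy]
    · simp [Finset.insert_inter_of_mem hx, Finset.singleton_inter_of_notMem hy']
    · simp [Finset.insert_inter_of_notMem hx', Finset.singleton_inter_of_mem hy]
  · rintro ⟨hX, h1, h2⟩
    obtain ⟨x, hx⟩ := Finset.card_eq_one.1 h1
    obtain ⟨y, hy⟩ := Finset.card_eq_one.1 h2
    refine ⟨x, (Finset.mem_inter.1 (hx ▸ Finset.mem_singleton_self x)).2, y,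
      (Finset.mem_inter.1 (hy ▸ Finset.mem_singleton_self y)).2, ?_⟩
    rw [← Finset.inter_eq_left.2 hX, Finset.inter_union_distrib_left, hx, hy]
    rfl

/-- The union of the sets `Q i` over all `i` with label `t`. -/
def labelUnion {q : ℕ} (Q : Fin q → Finset ℕ) (c : Fin q → Fin 3) (t : Fin 3) : Finset ℕ :=
  (Finset.univ.filter fun i => c i = t).biUnion Q

theorem mem_labelUnion {q : ℕ} {Q : Fin q → Finset ℕ} {c : Fin q → Fin 3} {t : Fin 3} {x : ℕ} :
    x ∈ labelUnion Q c t ↔ ∃ i, c i = t ∧ x ∈ Q i := by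
  simp [labelUnion]

theorem mem_labelUnion_iff {q : ℕ} {Q : Fin q → Finset ℕ}
    (hQ : ∀ i j, i ≠ j → Disjoint (Q i) (Q j)) {c : Fin q → Fin 3} {t : Fin 3} {x : ℕ} {i : Fin q}
    (hx : x ∈ Q i) : x ∈ labelUnion Q c t ↔ c i = t := by
  rw [mem_labelUnion]
  refine ⟨?_, fun h => ⟨i, h, hx⟩⟩
  rintro ⟨j, hj, hxj⟩
  by_cases h : i = j
  · rw [h, hj]
  · exact absurd hxj (Finset.disjoint_left.1 (hQ i j h) hx)

theorem isBlock_labelUnion {q : ℕ} {V : Finset ℕ} {Q : Fin q → Finset ℕ} (hV : ∀ i, Q i ⊆ V)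
    (hQ : ∀ i j, i ≠ j → Disjoint (Q i) (Q j)) (c : Fin q → Fin 3) :
    IsBlock V 2 (joinPairs (labelUnion Q c 0) (labelUnion Q c 1)) := by
  have hs : ∀ t, labelUnion Q c t ⊆ V := fun t => Finset.biUnion_subset.2 fun i _ => hV i
  refine isBlock_joinPairs (hs 0) (hs 1) (Finset.disjoint_left.2 fun x h0 h1 => ?_)
  obtain ⟨i, hi, hx⟩ := mem_labelUnion.1 h0
  rw [mem_labelUnion_iff hQ hx, hi] at h1
  exact absurd h1 (by decide)

/-- The labels of the two endpoints of an edge are `0` and `1`. -/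
def Splits01 (s t : Fin 3) : Prop := s = 0 ∧ t = 1 ∨ s = 1 ∧ t = 0

instance (s t : Fin 3) : Decidable (Splits01 s t) := by unfold Splits01; infer_instance

theorem mem_joinPairs_labelUnion {q : ℕ} {Q : Fin q → Finset ℕ}
    (hQ : ∀ i j, i ≠ j → Disjoint (Q i) (Q j)) {c : Fin q → Fin 3} {x y : ℕ} {i j : Fin q}
    (hx : x ∈ Q i) (hy : y ∈ Q j) :
    {x, y} ∈ joinPairs (labelUnion Q c 0) (labelUnion Q c 1) ↔ Splits01 (c i) (c j) := by
  constructor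
  · rintro ⟨a, ha, b, hb, h⟩
    have ha' : a ∈ ({x, y} : Finset ℕ) := h ▸ Finset.mem_insert_self a _
    have hb' : b ∈ ({x, y} : Finset ℕ) :=
      h ▸ Finset.mem_insert_of_mem (Finset.mem_singleton_self b)
    have hx' : x ∈ ({a, b} : Finset ℕ) := h ▸ Finset.mem_insert_self x _
    have hy' : y ∈ ({a, b} : Finset ℕ) :=
      h ▸ Finset.mem_insert_of_mem (Finset.mem_singleton_self y)
    simp only [Finset.mem_insert, Finset.mem_singleton] at ha' hb' hx' hy'
    have hne : a ≠ b := by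
      rintro rfl
      obtain ⟨k, hk, hak⟩ := mem_labelUnion.1 ha
      rw [mem_labelUnion_iff hQ hak, hk] at hb
      exact absurd hb (by decide)
    have : (a = x ∧ b = y) ∨ (a = y ∧ b = x) := by grind
    rcases this with ⟨rfl, rfl⟩ | ⟨rfl, rfl⟩
    · exact Or.inl ⟨(mem_labelUnion_iff hQ hx).1 ha, (mem_labelUnion_iff hQ hy).1 hb⟩
    · exact Or.inr ⟨(mem_labelUnion_iff hQ hx).1 hb, (mem_labelUnion_iff hQ hy).1 ha⟩
  · rintro (⟨h0, h1⟩ | ⟨h1, h0⟩)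
    · exact ⟨x, (mem_labelUnion_iff hQ hx).2 h0, y, (mem_labelUnion_iff hQ hy).2 h1, rfl⟩
    · exact ⟨y, (mem_labelUnion_iff hQ hy).2 h0, x, (mem_labelUnion_iff hQ hx).2 h1,
        Finset.pair_comm x y⟩

theorem joinPairs_labelUnion_subset {q : ℕ} {Q : Fin q → Finset ℕ} (c : Fin q → Fin 3) :
    joinPairs (labelUnion Q c 0) (labelUnion Q c 1) ⊆ crossPairs Q := by
  rintro X ⟨x, hx, y, hy, rfl⟩
  obtain ⟨i, hi, hx⟩ := mem_labelUnion.1 hx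
  obtain ⟨j, hj, hy⟩ := mem_labelUnion.1 hy
  refine ⟨i, j, ?_, x, hx, y, hy, rfl⟩
  rintro rfl
  rw [hi] at hj
  exact absurd hj (by decide)

/-- Together with `labelSix`, fourteen products of complete bipartite graphs which partition the
product of the complete graphs on four and on six vertices; the label `2` marks the vertices
outside the bipartite graph. -/
def labelFour : Fin 14 → Fin 4 → Fin 3 :=
  ![![0, 0, 1, 1], ![0, 0, 1, 1], ![0, 1, 0, 1], ![0, 1, 0, 1], ![0, 1, 1, 0], ![0, 1, 1, 0],
    ![0, 1, 2, 2], ![2, 2, 0, 1], ![0, 2, 1, 2], ![2, 0, 2, 1],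
    ![0, 2, 2, 1], ![2, 0, 1, 2], ![0, 2, 2, 1], ![2, 0, 1, 2]]

/-- See `labelFour`. -/
def labelSix : Fin 14 → Fin 6 → Fin 3 :=
  ![![2, 2, 1, 1, 2, 0], ![0, 2, 2, 0, 1, 2], ![2, 0, 2, 2, 1, 0], ![1, 0, 0, 2, 2, 2],
    ![2, 1, 0, 2, 2, 0], ![0, 0, 0, 1, 2, 2],
    ![0, 2, 0, 0, 1, 1], ![0, 2, 0, 0, 1, 1], ![0, 1, 1, 2, 0, 1], ![0, 1, 1, 2, 0, 1],
    ![0, 0, 2, 1, 2, 1], ![0, 0, 2, 1, 2, 1], ![2, 0, 1, 0, 0, 2], ![2, 0, 1, 0, 0, 2]]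

theorem existsUnique_splits01 : ∀ i j : Fin 4, i ≠ j → ∀ i' j' : Fin 6, i' ≠ j' →
    ∃! l : Fin 14, Splits01 (labelFour l i) (labelFour l j) ∧
      Splits01 (labelSix l i') (labelSix l j') := by
  unfold ExistsUnique
  decide +kernel

theorem hasCover_crossPairs {V W : Finset ℕ} (hVW : Disjoint V W) {Q : Fin 4 → Finset ℕ}
    {R : Fin 6 → Finset ℕ} (hQV : ∀ i, Q i ⊆ V) (hQ : ∀ i j, i ≠ j → Disjoint (Q i) (Q j))
    (hRW : ∀ i, R i ⊆ W) (hR : ∀ i j, i ≠ j → Disjoint (R i) (R j)) :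
    HasCover (V ∪ W) 4 (famProd V W (crossPairs Q) (crossPairs R)) 14 := by
  refine ⟨Fin 14, inferInstance, fun l => famProd V W
    (joinPairs (labelUnion Q (labelFour l) 0) (labelUnion Q (labelFour l) 1))
    (joinPairs (labelUnion R (labelSix l) 0) (labelUnion R (labelSix l) 1)), by simp,
    fun l => (isBlock_labelUnion hQV hQ _).prod hVW (isBlock_labelUnion hRW hR _), ?_, ?_⟩
  · rintro X ⟨hX, ⟨i, j, hij, x, hx, y, hy, h1⟩, ⟨i', j', hij', x', hx', y', hy', h2⟩⟩
    simp only [famProd, Set.mem_ofPred_eq, h1, h2, mem_joinPairs_labelUnion hQ hx hy,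
      mem_joinPairs_labelUnion hR hx' hy', hX, true_and]
    exact existsUnique_splits01 i j hij i' j' hij'
  · rintro l X ⟨hX, h1, h2⟩
    exact ⟨hX, joinPairs_labelUnion_subset _ h1, joinPairs_labelUnion_subset _ h2⟩

/-- Separating `p` vertices from `V`, the pairs in `V` split into a blown-up complete graph on
`p + 1` vertices and the pairs of the remaining vertices. -/
theorem exists_crossPairs {p : ℕ} {V : Finset ℕ} (hp : p ≤ V.card) :
    ∃ (Q : Fin (p + 1) → Finset ℕ) (V' : Finset ℕ), V' ⊆ V ∧ V'.card = V.card - p ∧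
      (∀ i, Q i ⊆ V) ∧ (∀ i j, i ≠ j → Disjoint (Q i) (Q j)) ∧
      (∀ X, X ∈ layer V 2 ↔ X ∈ crossPairs Q ∨ X ∈ layer V' 2) ∧
      ∀ X ∈ crossPairs Q, X ∉ layer V' 2 := by
  obtain ⟨S, hS, rfl⟩ := Finset.exists_subset_card_eq hp
  let e : Fin S.card ≃ S := S.equivFin.symm
  let Q : Fin (S.card + 1) → Finset ℕ := Fin.cons (V \ S) fun i => {(e i : ℕ)}
  have hQ0 : Q 0 = V \ S := rfl
  have hQs : ∀ i : Fin S.card, Q i.succ = {(e i : ℕ)} := fun i => rfl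
  have hQ : ∀ i j, i ≠ j → Disjoint (Q i) (Q j) := by
    intro i j hij
    cases i using Fin.cases with
    | zero =>
      cases j using Fin.cases with
      | zero => exact absurd rfl hij
      | succ j => simp [hQ0, hQs]
    | succ i =>
      cases j using Fin.cases with
      | zero => simp [hQ0, hQs]
      | succ j =>
        have : i ≠ j := fun h => hij (by rw [h])
        simpa [hQs, Subtype.coe_inj] using this
  have hQV : ∀ i, Q i ⊆ V := by
    intro i
    cases i using Fin.cases with
    | zero => exact Finset.sdiff_subset
    | succ i => simpa [hQs] using hS (e i).2
  have hcov : ∀ x ∈ V, ∃ i, x ∈ Q i := by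
    intro x hx
    by_cases hxS : x ∈ S
    · exact ⟨(e.symm ⟨x, hxS⟩).succ, by simp [hQs]⟩
    · exact ⟨0, by simp [hQ0, hx, hxS]⟩
  refine ⟨Q, V \ S, Finset.sdiff_subset, Finset.card_sdiff_of_subset hS, hQV, hQ, fun X => ?_, ?_⟩
  · constructor
    · rintro ⟨hX, hc⟩
      obtain ⟨x, y, hxy, rfl⟩ := Finset.card_eq_two.1 hc
      rw [Finset.insert_subset_iff, Finset.singleton_subset_iff] at hX
      obtain ⟨i, hi⟩ := hcov x hX.1
      obtain ⟨j, hj⟩ := hcov y hX.2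
      by_cases hij : i = j
      · subst hij
        right
        cases i using Fin.cases with
        | zero =>
          refine ⟨?_, hc⟩
          rw [Finset.insert_subset_iff, Finset.singleton_subset_iff]
          exact ⟨hi, hj⟩
        | succ i =>
          rw [hQs, Finset.mem_singleton] at hi hj
          exact absurd (hi.trans hj.symm) hxy
      · exact Or.inl ⟨i, j, hij, x, hi, y, hj, rfl⟩
    · rintro (⟨i, j, hij, x, hx, y, hy, rfl⟩ | ⟨hX, hc⟩)
      · refine ⟨?_, Finset.card_pair ?_⟩
        · rw [Finset.insert_subset_iff, Finset.singleton_subset_iff]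
          exact ⟨hQV i hx, hQV j hy⟩
        · rintro rfl
          exact Finset.disjoint_left.1 (hQ i j hij) hx hy
      · exact ⟨hX.trans Finset.sdiff_subset, hc⟩
  · rintro X ⟨i, j, hij, x, hx, y, hy, rfl⟩ ⟨hX, -⟩
    rw [Finset.insert_subset_iff, Finset.singleton_subset_iff] at hX
    have h0 : ∀ (k : Fin (S.card + 1)) (z : ℕ), z ∈ Q k → z ∈ V \ S → k = 0 := by
      intro k z hz hz'
      by_contra hk
      exact Finset.disjoint_left.1 (hQ k 0 hk) hz hz'
    exact hij ((h0 i x hx hX.1).trans (h0 j y hy hX.2).symm)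

theorem HasCover.famProd_layer_two {p r k : ℕ} {V₀ W : Finset ℕ} {G : Set (Finset ℕ)}
    (h : ∀ Q : Fin (p + 1) → Finset ℕ, (∀ i, Q i ⊆ V₀) → (∀ i j, i ≠ j → Disjoint (Q i) (Q j)) →
      HasCover (V₀ ∪ W) r (famProd V₀ W (crossPairs Q) G) k) (a : ℕ) :
    ∀ V ⊆ V₀, V.card = p * a → HasCover (V₀ ∪ W) r (famProd V₀ W (layer V 2) G) (k * a) := by
  induction a with
  | zero =>
    intro V _ hV
    refine (hasCover_empty _ _).of_eq rfl (Nat.zero_le _) fun X => ?_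
    simp only [Set.mem_empty_iff_false, iff_false]
    rintro ⟨-, ⟨h1, h2⟩, -⟩
    have := Finset.card_le_card h1
    rw [mul_zero] at hV
    omega
  | succ a ih =>
    intro V hV hc
    rw [mul_add_one] at hc
    obtain ⟨Q, V', hV', hc', hQV, hQ, hmem, hdis⟩ := exists_crossPairs (p := p) (V := V) (by omega)
    have h1 := h Q (fun i => (hQV i).trans hV) hQ
    have h2 := ih V' (hV'.trans hV) (by omega)
    refine (h1.union (fun X hX hX' => hdis _ hX.2.1 hX'.2.1) h2).of_eq rfl
      (by rw [mul_add_one, add_comm]) fun X => ?_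
    simp only [famProd, Set.mem_union, Set.mem_ofPred_eq, hmem]
    tauto

theorem famProd_comm (V W : Finset ℕ) (F G : Set (Finset ℕ)) :
    famProd V W F G = famProd W V G F := by
  ext X
  simp only [famProd, Set.mem_ofPred_eq, Finset.union_comm V W]
  tauto

theorem hasCover_layer_two_prod {V W : Finset ℕ} (hVW : Disjoint V W) {a b : ℕ}
    (hV : V.card = 3 * a) (hW : W.card = 5 * b) :
    HasCover (V ∪ W) 4 (famProd V W (layer V 2) (layer W 2)) (14 * b * a) := by
  refine HasCover.famProd_layer_two (p := 3) (fun Q hQV hQ => ?_) a V subset_rfl hV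
  rw [famProd_comm, Finset.union_comm]
  refine HasCover.famProd_layer_two (p := 5) (fun R hRW hR => ?_) b W subset_rfl hW
  rw [famProd_comm, Finset.union_comm]
  exact hasCover_crossPairs hVW hQV hQ hRW hR

/-- The sets in the union of the parts `P i`, `i ∈ T`, which have exactly `r i` elements in `P i`
for each `i ∈ T`. -/
def typeFam (P : ℕ → Finset ℕ) (T : Finset ℕ) (r : ℕ → ℕ) : Set (Finset ℕ) :=
  {X | X ⊆ T.biUnion P ∧ ∀ i ∈ T, (X ∩ P i).card = r i}

theorem disjoint_biUnion_parts {P : ℕ → Finset ℕ} (hP : ∀ i j, i ≠ j → Disjoint (P i) (P j))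
    {S T : Finset ℕ} (hST : Disjoint S T) : Disjoint (S.biUnion P) (T.biUnion P) := by
  rw [Finset.disjoint_biUnion_left]
  intro i hi
  rw [Finset.disjoint_biUnion_right]
  intro j hj
  exact hP i j fun h => Finset.disjoint_left.1 hST hi (h ▸ hj)

theorem typeFam_singleton (P : ℕ → Finset ℕ) (a : ℕ) (r : ℕ → ℕ) :
    typeFam P {a} r = layer (P a) (r a) := by
  ext X
  simp only [typeFam, layer, Set.mem_ofPred_eq, Finset.singleton_biUnion, Finset.mem_singleton,
    forall_eq]
  refine and_congr_right fun h => ?_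
  rw [Finset.inter_eq_left.2 h]

theorem HasCover.typeFam_union {P : ℕ → Finset ℕ} (hP : ∀ i j, i ≠ j → Disjoint (P i) (P j))
    {S T : Finset ℕ} (hST : Disjoint S T) {r : ℕ → ℕ} {a b k l : ℕ}
    (hS : HasCover (S.biUnion P) a (typeFam P S r) k)
    (hT : HasCover (T.biUnion P) b (typeFam P T r) l) :
    HasCover ((S ∪ T).biUnion P) (a + b) (typeFam P (S ∪ T) r) (k * l) := by
  have h := hS.prod (disjoint_biUnion_parts hP hST) hT
  rw [Finset.union_biUnion]
  refine h.of_eq rfl le_rfl fun X => ?_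
  have e : ∀ U : Finset ℕ, ∀ i ∈ U, X ∩ U.biUnion P ∩ P i = X ∩ P i := fun U i hi => by
    rw [Finset.inter_assoc, Finset.inter_eq_right.2 (Finset.subset_biUnion_of_mem P hi)]
  simp only [typeFam, famProd, Set.mem_ofPred_eq, Finset.union_biUnion, Finset.inter_subset_right,
    true_and, Finset.mem_union, or_imp, forall_and]
  refine and_congr_right fun _ => and_congr ?_ ?_
  · exact forall₂_congr fun i hi => by rw [e S i hi]
  · exact forall₂_congr fun i hi => by rw [e T i hi]

theorem hasCover_typeFam {P : ℕ → Finset ℕ} (hP : ∀ i j, i ≠ j → Disjoint (P i) (P j))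
    (T : Finset ℕ) (r : ℕ → ℕ) :
    HasCover (T.biUnion P) (∑ i ∈ T, r i) (typeFam P T r)
      (∏ i ∈ T, (P i).card.choose (r i / 2)) := by
  induction T using Finset.induction_on with
  | empty =>
    refine (isBlock_empty _).hasCover.of_eq rfl le_rfl fun X => ?_
    simp [typeFam]
  | insert a T ha ih =>
    have h : HasCover (({a} : Finset ℕ).biUnion P) (r a) (typeFam P {a} r)
        ((P a).card.choose (r a / 2)) := by
      rw [typeFam_singleton, Finset.singleton_biUnion]
      exact hasCover_layer _ _
    rw [Finset.sum_insert ha, Finset.prod_insert ha, Finset.insert_eq]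
    exact h.typeFam_union hP (Finset.disjoint_singleton_left.2 ha) ih

theorem hasCover_typeFam_two {P : ℕ → Finset ℕ} (hP : ∀ i j, i ≠ j → Disjoint (P i) (P j))
    {q : ℕ} (j : ℕ) : ∀ T : Finset ℕ, T.card = j → (∀ i ∈ T, (P i).card = 15 * q) →
      HasCover (T.biUnion P) (2 * j) (typeFam P T fun _ => 2)
        ((210 * q ^ 2) ^ (j / 2) * (15 * q) ^ (j % 2)) := by
  induction j using Nat.twoStepInduction with
  | zero =>
    intro T hT _
    obtain rfl := Finset.card_eq_zero.1 hT
    simpa using hasCover_typeFam hP ∅ fun _ => 2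
  | one =>
    intro T hT hc
    obtain ⟨a, rfl⟩ := Finset.card_eq_one.1 hT
    refine (hasCover_typeFam hP {a} fun _ => 2).of_eq (by simp) ?_ fun X => Iff.rfl
    simp [hc a (Finset.mem_singleton_self a)]
  | more j ih _ =>
    intro T hT hc
    obtain ⟨S, hS, hS2⟩ := Finset.exists_subset_card_eq (show 2 ≤ T.card by omega)
    obtain ⟨a, b, hab, rfl⟩ := Finset.card_eq_two.1 hS2
    have hcT : (T \ {a, b}).card = j := by
      rw [Finset.card_sdiff_of_subset hS]
      omega
    have h2 := ih (T \ {a, b}) hcT fun i hi => hc i (Finset.sdiff_subset hi)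
    have ha := hc a (hS (Finset.mem_insert_self a _))
    have hb := hc b (hS (Finset.mem_insert_of_mem (Finset.mem_singleton_self b)))
    have h1 : HasCover (({a, b} : Finset ℕ).biUnion P) 4 (typeFam P {a, b} fun _ => 2)
        (210 * q ^ 2) := by
      have := hasCover_layer_two_prod (a := 5 * q) (b := 3 * q) (hP a b hab) (by omega) (by omega)
      rw [Finset.biUnion_insert, Finset.singleton_biUnion]
      refine this.of_eq rfl (by nlinarith) fun X => ?_
      simp [typeFam, mem_famProd_layer]
    have h3 := h1.typeFam_union hP Finset.disjoint_sdiff h2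
    rw [Finset.union_sdiff_of_subset hS] at h3
    refine h3.of_eq (by ring) ?_ fun X => Iff.rfl
    rw [Nat.add_mod_right, show (j + 2) / 2 = j / 2 + 1 by omega]
    exact le_of_eq (by ring)

theorem hasCover_typeFam_zero_two {P : ℕ → Finset ℕ}
    (hP : ∀ i j, i ≠ j → Disjoint (P i) (P j)) {q t : ℕ} {T : Finset ℕ}
    (hT : ∀ i ∈ T, (P i).card = 15 * q) {r : ℕ → ℕ} (hr : ∀ i ∈ T, r i = 0 ∨ r i = 2)
    (hsum : ∑ i ∈ T, r i = 2 * t) :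
    HasCover (T.biUnion P) (2 * t) (typeFam P T r)
      ((210 * q ^ 2) ^ (t / 2) * (15 * q) ^ (t % 2)) := by
  have hc : (T.filter fun i => r i = 2).card = t := by
    have : ∑ i ∈ T, r i = ∑ i ∈ T, if r i = 2 then 2 else 0 :=
      Finset.sum_congr rfl fun i hi => by rcases hr i hi with h | h <;> simp [h]
    rw [← Finset.sum_filter, Finset.sum_const, hsum, smul_eq_mul] at this
    omega
  have hsub : (T.filter fun i => r i = 2) ⊆ T := Finset.filter_subset _ _
  have h := hasCover_typeFam_two hP t _ hc fun i hi => hT i (hsub hi)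
  refine (h.mono (Finset.biUnion_subset_biUnion_of_subset_left P hsub) le_rfl).of_eq rfl le_rfl
    fun X => ?_
  constructor
  · rintro ⟨hX, h1⟩
    refine ⟨fun x hx => ?_, fun i hi => ?_⟩
    · obtain ⟨i, hi, hxi⟩ := Finset.mem_biUnion.1 (hX hx)
      refine Finset.mem_biUnion.2 ⟨i, Finset.mem_filter.2 ⟨hi, (hr i hi).resolve_left fun h0 => ?_⟩,
        hxi⟩
      have h2 := h1 i hi
      rw [h0, Finset.card_eq_zero] at h2
      exact Finset.notMem_empty x (h2 ▸ Finset.mem_inter.2 ⟨hx, hxi⟩)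
    · rw [Finset.mem_filter] at hi
      rw [h1 i hi.1, hi.2]
  · rintro ⟨hX, h1⟩
    refine ⟨hX.trans (Finset.biUnion_subset_biUnion_of_subset_left P hsub), fun i hi => ?_⟩
    rcases hr i hi with h0 | h2
    · rw [h0, Finset.card_eq_zero, ← Finset.disjoint_iff_inter_eq_empty]
      refine Finset.disjoint_of_subset_left hX ?_
      rw [Finset.disjoint_biUnion_left]
      intro j hj
      refine hP j i ?_
      rintro rfl
      rw [Finset.mem_filter] at hj
      omega
    · rw [h1 i (Finset.mem_filter.2 ⟨hi, h2⟩), h2]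

open Classical in
/-- The number of blocks used for the sets of type `r`, `∑ i ∈ T, r i = 2 * t`, in parts of
size `15 * q`. -/
noncomputable def typeCost (q t : ℕ) (T : Finset ℕ) (r : ℕ → ℕ) : ℕ :=
  if ∀ i ∈ T, r i = 0 ∨ r i = 2 then (210 * q ^ 2) ^ (t / 2) * (15 * q) ^ (t % 2)
  else ∏ i ∈ T, (15 * q).choose (r i / 2)

theorem hasCover_layer_even {P : ℕ → Finset ℕ} (hP : ∀ i j, i ≠ j → Disjoint (P i) (P j))
    {q t : ℕ} {T : Finset ℕ} (hT : ∀ i ∈ T, (P i).card = 15 * q) :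
    HasCover (T.biUnion P) (2 * t) (layer (T.biUnion P) (2 * t))
      (∑ r ∈ T.piAntidiag (2 * t), typeCost q t T r) := by
  have h : ∀ r : T.piAntidiag (2 * t), HasCover (T.biUnion P) (2 * t) (typeFam P T r.1)
      (typeCost q t T r.1) := by
    rintro ⟨r, hr⟩
    have hs := (Finset.mem_piAntidiag.1 hr).1
    unfold typeCost
    split_ifs with h02
    · exact hasCover_typeFam_zero_two hP hT h02 hs
    · refine (hasCover_typeFam hP T r).of_eq hs (le_of_eq ?_) fun X => Iff.rfl
      exact Finset.prod_congr rfl fun i hi => by rw [hT i hi]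
  refine (HasCover.iUnion ?_ h).of_eq rfl (le_of_eq (Finset.sum_coe_sort _ (typeCost q t T)))
    fun X => ?_
  · rintro X ⟨r, hr⟩ ⟨r', hr'⟩ ⟨-, h1⟩ ⟨-, h2⟩
    rw [Finset.mem_piAntidiag] at hr hr'
    ext i
    by_cases hi : i ∈ T
    · exact (h1 i hi).symm.trans (h2 i hi)
    · show r i = r' i
      rw [not_not.1 (mt (hr.2 i) hi), not_not.1 (mt (hr'.2 i) hi)]
  · have hcard : X ⊆ T.biUnion P → X.card = ∑ i ∈ T, (X ∩ P i).card := fun hX => by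
      rw [← Finset.card_biUnion, ← Finset.inter_biUnion, Finset.inter_eq_left.2 hX]
      intro i _ j _ hij
      exact Finset.disjoint_of_subset_left Finset.inter_subset_right
        (Finset.disjoint_of_subset_right Finset.inter_subset_right (hP i j hij))
    rw [Set.mem_iUnion]
    constructor
    · rintro ⟨hX, hc⟩
      refine ⟨⟨fun i => if i ∈ T then (X ∩ P i).card else 0, ?_⟩, hX, fun i hi => ?_⟩
      · rw [Finset.mem_piAntidiag, ← hc, hcard hX]
        exact ⟨Finset.sum_congr rfl fun i hi => by simp [hi], fun i hi => by
          by_contra h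
          simp [h] at hi⟩
      · simp [hi]
    · rintro ⟨⟨r, hr⟩, hX, h1⟩
      refine ⟨hX, ?_⟩
      rw [hcard hX, ← (Finset.mem_piAntidiag.1 hr).1]
      exact Finset.sum_congr rfl h1

open Classical in
/-- The leading coefficient of the number of blocks for the sets having `2 * s i` elements in the
part with index `i`. -/
noncomputable def typeLead (t : ℕ) (T : Finset ℕ) (s : ℕ → ℕ) : ℝ :=
  ∏ i ∈ T, ((s i).factorial : ℝ)⁻¹ - if ∀ i ∈ T, s i ≤ 1 then 1 - (14 / 15 : ℝ) ^ (t / 2) else 0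

/-- The leading coefficient of the number of blocks for the `2 * t`-sets in `k` parts. -/
noncomputable def evenLead (k t : ℕ) : ℝ :=
  (k : ℝ) ^ t / t.factorial - k.choose t * (1 - (14 / 15 : ℝ) ^ (t / 2))

theorem sum_prod_inv_factorial (T : Finset ℕ) (t : ℕ) :
    ∑ s ∈ T.piAntidiag t, ∏ i ∈ T, ((s i).factorial : ℝ)⁻¹ = (T.card : ℝ) ^ t / t.factorial := by
  have h := Finset.sum_pow_eq_sum_piAntidiag T (fun _ : ℕ => (1 : ℝ)) t
  simp only [Finset.sum_const, nsmul_eq_mul, mul_one, one_pow, Finset.prod_const_one] at h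
  rw [h, Finset.sum_div]
  refine Finset.sum_congr rfl fun s hs => ?_
  have h2 := Nat.multinomial_spec T s
  rw [(Finset.mem_piAntidiag.1 hs).1] at h2
  rw [← h2, Finset.prod_inv_distrib]
  push_cast
  have h3 : (Nat.multinomial T s : ℝ) ≠ 0 := by
    intro h0
    rw [Nat.cast_eq_zero] at h0
    rw [h0, mul_zero] at h2
    exact t.factorial_ne_zero h2.symm
  have h4 : (∏ i ∈ T, ((s i).factorial : ℝ)) ≠ 0 :=
    Finset.prod_ne_zero_iff.2 fun i _ => by exact_mod_cast (s i).factorial_ne_zero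
  field_simp

open Classical in
theorem choose_le_card_filter (T : Finset ℕ) (t : ℕ) :
    T.card.choose t ≤ ((T.piAntidiag t).filter fun s => ∀ i ∈ T, s i ≤ 1).card := by
  rw [← Finset.card_powersetCard]
  refine Finset.card_le_card_of_injOn (fun S i => if i ∈ S then 1 else 0) ?_ ?_
  · intro S hS
    rw [Finset.mem_coe, Finset.mem_powersetCard] at hS
    rw [Finset.mem_coe, Finset.mem_filter, Finset.mem_piAntidiag]
    refine ⟨⟨?_, fun i hi => hS.1 (by by_contra h; simp [h] at hi)⟩, fun i _ => by
      dsimp only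
      split_ifs <;> simp⟩
    rw [Finset.sum_ite_mem, Finset.inter_eq_right.2 hS.1]
    simp [hS.2]
  · intro S _ S' _ h
    ext i
    have := congrFun h i
    by_cases h1 : i ∈ S <;> by_cases h2 : i ∈ S' <;> simp_all

theorem sum_typeLead_le (t : ℕ) (T : Finset ℕ) :
    ∑ s ∈ T.piAntidiag t, typeLead t T s ≤ evenLead T.card t := by
  classical
  unfold typeLead evenLead
  rw [Finset.sum_sub_distrib, sum_prod_inv_factorial, ← Finset.sum_filter, Finset.sum_const,
    nsmul_eq_mul]
  have h : (0 : ℝ) ≤ 1 - (14 / 15 : ℝ) ^ (t / 2) :=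
    sub_nonneg.2 (pow_le_one₀ (by norm_num) (by norm_num))
  have h2 : (T.card.choose t : ℝ) ≤ _ := Nat.cast_le.2 (choose_le_card_filter T t)
  convert sub_le_sub_left (mul_le_mul_of_nonneg_right h2 h) _

theorem typeCost_le_of_even {q t : ℕ} {T : Finset ℕ} {s : ℕ → ℕ} (hs : ∑ i ∈ T, s i = t) :
    (typeCost q t T (fun i => 2 * s i) : ℝ) ≤ (15 * q : ℝ) ^ t * typeLead t T s := by
  have h02 : (∀ i ∈ T, 2 * s i = 0 ∨ 2 * s i = 2) ↔ ∀ i ∈ T, s i ≤ 1 :=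
    forall₂_congr fun i _ => by omega
  unfold typeCost typeLead
  simp only [h02]
  split_ifs with h
  · rw [Finset.prod_congr rfl (g := fun _ => (1 : ℝ)), Finset.prod_const_one, sub_sub_cancel]
    · push_cast
      rw [show (210 * (q : ℝ) ^ 2) = (15 * q) ^ 2 * (14 / 15) by ring, mul_pow, ← pow_mul,
        mul_right_comm, ← pow_add, Nat.div_add_mod]
    · intro i hi
      have := h i hi
      interval_cases s i <;> simp
  · rw [sub_zero, ← hs, ← Finset.prod_pow_eq_pow_sum, ← Finset.prod_mul_distrib]
    push_cast
    refine Finset.prod_le_prod (fun _ _ => Nat.cast_nonneg _) fun i _ => ?_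
    rw [Nat.mul_div_cancel_left _ two_pos, ← div_eq_mul_inv]
    exact_mod_cast Nat.choose_le_pow_div (α := ℝ) (s i) (15 * q)

theorem typeCost_le_of_odd {q t : ℕ} (hq : 0 < q) {T : Finset ℕ} {r : ℕ → ℕ}
    (hr : ∑ i ∈ T, r i = 2 * t) (hodd : ∃ i ∈ T, ¬ Even (r i)) :
    (typeCost q t T r : ℝ) ≤ (15 * q : ℝ) ^ t / (15 * q) := by
  obtain ⟨i, hi, hri⟩ := hodd
  have hn : ¬ ∀ i ∈ T, r i = 0 ∨ r i = 2 := fun h => by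
    rcases h i hi with h | h <;> exact hri (by simp [h])
  have hlt : ∑ i ∈ T, 2 * (r i / 2) < ∑ i ∈ T, r i :=
    Finset.sum_lt_sum (fun i _ => Nat.mul_div_le _ _)
      ⟨i, hi, by rw [Nat.not_even_iff] at hri; omega⟩
  rw [← Finset.mul_sum, hr] at hlt
  have hpos : 0 < 15 * q := by omega
  have h1 : (∏ i ∈ T, (15 * q).choose (r i / 2)) * (15 * q) ≤ (15 * q) ^ t := by
    calc _ ≤ (∏ i ∈ T, (15 * q) ^ (r i / 2)) * (15 * q) :=
          Nat.mul_le_mul_right _ (Finset.prod_le_prod' fun i _ => Nat.choose_le_pow _ _)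
      _ = (15 * q) ^ (∑ i ∈ T, r i / 2 + 1) := by rw [Finset.prod_pow_eq_pow_sum, pow_succ]
      _ ≤ (15 * q) ^ t := Nat.pow_le_pow_right hpos (by omega)
  unfold typeCost
  rw [if_neg hn, le_div_iff₀ (by exact_mod_cast hpos)]
  exact_mod_cast h1

theorem sum_typeCost_le {q : ℕ} (hq : 0 < q) (t : ℕ) (T : Finset ℕ) :
    ((∑ r ∈ T.piAntidiag (2 * t), typeCost q t T r : ℕ) : ℝ) ≤
      (15 * q : ℝ) ^ t * (evenLead T.card t + (T.piAntidiag (2 * t)).card / (15 * q)) := by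
  classical
  rw [Nat.cast_sum, mul_add, ← Finset.sum_filter_add_sum_filter_not _ fun r => ∀ i ∈ T, Even (r i)]
  refine add_le_add ?_ ?_
  · refine le_trans ?_ (mul_le_mul_of_nonneg_left (sum_typeLead_le t T) (by positivity))
    rw [Finset.mul_sum]
    refine le_trans (le_of_eq ?_) (Finset.sum_le_sum fun s hs =>
      typeCost_le_of_even (q := q) (Finset.mem_piAntidiag.1 hs).1)
    refine Finset.sum_nbij' (fun r i => r i / 2) (fun s i => 2 * s i) ?_ ?_ ?_ ?_ ?_
    · intro r hr
      rw [Finset.mem_filter, Finset.mem_piAntidiag] at hr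
      rw [Finset.mem_piAntidiag]
      refine ⟨?_, fun i hi => hr.1.2 i fun h => hi (by simp [h])⟩
      have : 2 * ∑ i ∈ T, r i / 2 = 2 * t := by
        rw [← hr.1.1, Finset.mul_sum]
        exact Finset.sum_congr rfl fun i hi => Nat.two_mul_div_two_of_even (hr.2 i hi)
      omega
    · intro s hs
      rw [Finset.mem_piAntidiag] at hs
      rw [Finset.mem_filter, Finset.mem_piAntidiag, ← Finset.mul_sum, hs.1]
      exact ⟨⟨rfl, fun i hi => hs.2 i fun h => hi (by simp [h])⟩, fun i _ => even_two_mul _⟩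
    · intro r hr
      rw [Finset.mem_filter, Finset.mem_piAntidiag] at hr
      ext i
      by_cases hi : i ∈ T
      · exact Nat.two_mul_div_two_of_even (hr.2 i hi)
      · simp [not_not.1 (mt (hr.1.2 i) hi)]
    · intro s _
      ext i
      simp
    · intro r hr
      rw [Finset.mem_filter, Finset.mem_piAntidiag] at hr
      congr 2
      ext i
      by_cases hi : i ∈ T
      · exact (Nat.two_mul_div_two_of_even (hr.2 i hi)).symm
      · simp [not_not.1 (mt (hr.1.2 i) hi)]
  · refine (Finset.sum_le_card_nsmul _ _ ((15 * q : ℝ) ^ t / (15 * q)) fun r hr => ?_).trans ?_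
    · rw [Finset.mem_filter, Finset.mem_piAntidiag] at hr
      exact typeCost_le_of_odd hq hr.1.1 (by simpa using hr.2)
    · rw [nsmul_eq_mul, mul_div_left_comm]
      gcongr
      exact Finset.filter_subset _ _

theorem hasCover_odd_half {A B : Finset ℕ} (hAB : Disjoint A B) {e : ℕ → ℕ}
    (he : ∀ t, HasCover B (2 * t) (layer B (2 * t)) (e t)) (d : ℕ) :
    HasCover (A ∪ B) (2 * d + 1) {X | X ∈ layer (A ∪ B) (2 * d + 1) ∧ Odd (X ∩ A).card}
      (∑ s ∈ Finset.range (d + 1), A.card.choose s * e (d - s)) := by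
  have h : ∀ s : Fin (d + 1), HasCover (A ∪ B) (2 * d + 1)
      (famProd A B (layer A (2 * s + 1)) (layer B (2 * (d - s)))) (A.card.choose s * e (d - s)) :=
    fun s => ((hasCover_layer A (2 * s + 1)).prod hAB (he (d - s))).of_eq (by omega)
      (by rw [show (2 * (s : ℕ) + 1) / 2 = s by omega]) fun X => Iff.rfl
  refine (HasCover.iUnion ?_ h).of_eq rfl
    (le_of_eq (Fin.sum_univ_eq_sum_range (fun s => A.card.choose s * e (d - s)) _)) fun X => ?_
  · intro X i j hi hj
    have h1 := (mem_famProd_layer.1 hi).2.1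
    have h2 := (mem_famProd_layer.1 hj).2.1
    omega
  · simp only [Set.mem_iUnion, mem_famProd_layer]
    constructor
    · rintro ⟨⟨hX, hc⟩, s, hs⟩
      rw [card_inter_union hAB hX] at hc
      exact ⟨⟨s, by omega⟩, hX, hs, by dsimp only; omega⟩
    · rintro ⟨s, hX, h1, h2⟩
      have := card_inter_union hAB hX
      exact ⟨⟨hX, by omega⟩, s, h1⟩

theorem hasCover_layer_odd {A B : Finset ℕ} (hAB : Disjoint A B) {e e' : ℕ → ℕ}
    (he : ∀ t, HasCover B (2 * t) (layer B (2 * t)) (e t))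
    (he' : ∀ t, HasCover A (2 * t) (layer A (2 * t)) (e' t)) (d : ℕ) :
    HasCover (A ∪ B) (2 * d + 1) (layer (A ∪ B) (2 * d + 1))
      (∑ s ∈ Finset.range (d + 1), A.card.choose s * e (d - s) +
        ∑ s ∈ Finset.range (d + 1), B.card.choose s * e' (d - s)) := by
  have h1 := hasCover_odd_half hAB he d
  have h2 := hasCover_odd_half hAB.symm he' d
  rw [Finset.union_comm B A] at h2
  have hc : ∀ X ∈ layer (A ∪ B) (2 * d + 1), 2 * d + 1 = (X ∩ A).card + (X ∩ B).card :=
    fun X hX => hX.2.symm.trans (card_inter_union hAB hX.1)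
  refine (h1.union ?_ h2).of_eq rfl le_rfl fun X => ?_
  · rintro X ⟨hX, ⟨a, ha⟩⟩ ⟨-, ⟨b, hb⟩⟩
    have := hc X hX
    omega
  · simp only [Set.mem_union, Set.mem_ofPred_eq, ← and_or_left]
    refine ⟨fun hX => ⟨hX, ?_⟩, fun h => h.1⟩
    have := hc X hX
    by_contra! h
    rw [Nat.not_odd_iff_even, Nat.not_odd_iff_even] at h
    obtain ⟨⟨a, ha⟩, b, hb⟩ := h
    omega

/-- The leading coefficient of the number of blocks for the `2 * d + 1`-sets, the vertex set being
split into two halves of `k` parts each. -/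
noncomputable def oddLead (k d : ℕ) : ℝ :=
  2 * ∑ s ∈ Finset.range (d + 1), (k : ℝ) ^ s / s.factorial * evenLead k (d - s)

theorem sum_choose_mul_typeCost_le {q : ℕ} (hq : 0 < q) (d a k : ℕ) (T : Finset ℕ)
    (ha : a = k * (15 * q)) (hT : T.card = k) :
    ((∑ s ∈ Finset.range (d + 1), a.choose s *
        ∑ r ∈ T.piAntidiag (2 * (d - s)), typeCost q (d - s) T r : ℕ) : ℝ) ≤
      (15 * q : ℝ) ^ d * (∑ s ∈ Finset.range (d + 1), (k : ℝ) ^ s / s.factorial *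
        evenLead k (d - s) + (∑ s ∈ Finset.range (d + 1), (k : ℝ) ^ s / s.factorial *
        (T.piAntidiag (2 * (d - s))).card) / (15 * q)) := by
  rw [Nat.cast_sum, Finset.sum_div, ← Finset.sum_add_distrib, Finset.mul_sum]
  refine Finset.sum_le_sum fun s hs => ?_
  have hsd : s + (d - s) = d := by
    rw [Finset.mem_range] at hs
    omega
  rw [Nat.cast_mul]
  have h1 : (a.choose s : ℝ) ≤ (k : ℝ) ^ s / s.factorial * (15 * q : ℝ) ^ s := by
    refine (Nat.choose_le_pow_div s a).trans (le_of_eq ?_)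
    rw [ha]
    push_cast
    ring
  have h2 := sum_typeCost_le hq (d - s) T
  rw [hT] at h2
  refine (mul_le_mul h1 h2 (Nat.cast_nonneg _) (by positivity)).trans (le_of_eq ?_)
  rw [← hsd, pow_add, hsd]
  ring

theorem exists_f_odd_le (k d : ℕ) : ∃ K : ℝ, 0 ≤ K ∧ ∀ q n : ℕ, 0 < q → n ≤ 2 * k * (15 * q) →
    (f (2 * d + 1) n : ℝ) ≤ (15 * q : ℝ) ^ d * (oddLead k d + K / (15 * q)) := by
  let S := Finset.range k
  let T := Finset.Ico k (2 * k)
  let C : Finset ℕ → ℝ := fun U => ∑ s ∈ Finset.range (d + 1), (k : ℝ) ^ s / s.factorial *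
    (U.piAntidiag (2 * (d - s))).card
  have hC : ∀ U, 0 ≤ C U := fun U => Finset.sum_nonneg fun s _ => by positivity
  refine ⟨C T + C S, add_nonneg (hC T) (hC S), fun q n hq hn => ?_⟩
  let P : ℕ → Finset ℕ := fun i => Finset.Ico (i * (15 * q)) ((i + 1) * (15 * q))
  have hPc : ∀ i, (P i).card = 15 * q := fun i => by
    simp only [P, Nat.card_Ico, add_mul, one_mul]
    omega
  have hmem : ∀ x i, x ∈ P i ↔ x / (15 * q) = i := fun x i => by
    rw [Finset.mem_Ico, Nat.div_eq_iff (by omega)]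
    have : 0 < 15 * q := by omega
    rw [add_mul, one_mul]
    omega
  have hP : ∀ i j, i ≠ j → Disjoint (P i) (P j) := fun i j hij =>
    Finset.disjoint_left.2 fun x hi hj => hij (((hmem x i).1 hi).symm.trans ((hmem x j).1 hj))
  have hST : Disjoint S T := Finset.disjoint_left.2 fun x hx hx' => by
    rw [Finset.mem_range] at hx
    rw [Finset.mem_Ico] at hx'
    omega
  have hSc : S.card = k := Finset.card_range k
  have hTc : T.card = k := by
    rw [Nat.card_Ico]
    omega
  have hU : ∀ U : Finset ℕ, (U.biUnion P).card = U.card * (15 * q) := fun U => by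
    rw [Finset.card_biUnion fun i _ j _ hij => hP i j hij,
      Finset.sum_const_nat fun i _ => hPc i]
  have hsub : Finset.range n ⊆ S.biUnion P ∪ T.biUnion P := by
    intro x hx
    rw [Finset.mem_range] at hx
    have hlt : x / (15 * q) < 2 * k := (Nat.div_lt_iff_lt_mul (by omega)).2 (by omega)
    rw [← Finset.union_biUnion, Finset.mem_biUnion]
    refine ⟨x / (15 * q), ?_, (hmem _ _).2 rfl⟩
    rw [Finset.mem_union, Finset.mem_range, Finset.mem_Ico]
    omega
  have hcov := hasCover_layer_odd (disjoint_biUnion_parts hP hST)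
    (fun t => hasCover_layer_even (q := q) (t := t) hP fun i _ => hPc i)
    (fun t => hasCover_layer_even (q := q) (t := t) hP fun i _ => hPc i) d
  refine (Nat.cast_le.2 (f_le_of_hasCover hsub hcov)).trans ?_
  rw [Nat.cast_add]
  refine (add_le_add
    (sum_choose_mul_typeCost_le hq d _ k T (by rw [hU, hSc]) hTc)
    (sum_choose_mul_typeCost_le hq d _ k S (by rw [hU, hTc]) hSc)).trans (le_of_eq ?_)
  simp only [oddLead, C]
  ring

theorem oddLead_le : oddLead 5000 62 ≤ 9 / 10 * (10000 ^ 62 / (Nat.factorial 62 : ℝ)) := by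
  unfold oddLead evenLead
  norm_num [Finset.sum_range_succ, Nat.factorial, Nat.choose_eq_descFactorial_div_factorial,
    Nat.descFactorial]

/-- If the leading coefficient is small enough, then `f (2 * d + 1) n` is eventually at most
`c * (n choose d)`. -/
theorem exists_forall_f_odd_le {k d : ℕ} {a c : ℝ} (hk : 0 < k) (ha0 : 0 < a)
    (ha : oddLead k d ≤ a) (hac : a / (2 * k) ^ d < c / d.factorial) :
    ∃ N : ℕ, ∀ n : ℕ, N ≤ n → (f (2 * d + 1) n : ℝ) ≤ c * n.choose d := by
  obtain ⟨K, hK, hf⟩ := exists_f_odd_le k d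
  have hkr : (0 : ℝ) < k := Nat.cast_pos.2 hk
  have hinv : Filter.Tendsto (fun n : ℕ => ((n : ℝ))⁻¹) Filter.atTop (nhds 0) :=
    tendsto_inv_atTop_nhds_zero_nat
  have hlim : Filter.Tendsto
      (fun n : ℕ => (1 / (2 * k : ℝ) + 15 * (n : ℝ)⁻¹) ^ d * (a + K * (2 * k) * (n : ℝ)⁻¹))
      Filter.atTop (nhds ((1 / (2 * k : ℝ) + 15 * 0) ^ d * (a + K * (2 * k) * 0))) :=
    (((hinv.const_mul 15).const_add (1 / (2 * k : ℝ))).pow d).mul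
      ((hinv.const_mul (K * (2 * k))).const_add a)
  have hpow : ∀ᶠ n : ℕ in Filter.atTop, (n : ℝ) ^ d / (d.factorial : ℝ) ≠ 0 := by
    filter_upwards [Filter.eventually_gt_atTop 0] with n hn
    positivity
  have hchoose : Filter.Tendsto (fun n : ℕ => (n.choose d : ℝ) / (n : ℝ) ^ d) Filter.atTop
      (nhds (1 / (d.factorial : ℝ))) := by
    have h := ((Asymptotics.isEquivalent_iff_tendsto_one hpow).1 (isEquivalent_choose d)).mul_const
      (1 / (d.factorial : ℝ))
    rw [one_mul] at h
    refine h.congr fun n => ?_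
    have : (d.factorial : ℝ) ≠ 0 := by positivity
    simp only [Pi.div_apply]
    field_simp
  have hev := hlim.eventually_lt (hchoose.const_mul c) (by
    rw [mul_zero, mul_zero, add_zero, add_zero, one_div_pow, one_div_mul_eq_div, mul_one_div]
    exact hac)
  obtain ⟨N, hN⟩ := Filter.eventually_atTop.1 hev
  refine ⟨max N 1, fun n hn => ?_⟩
  have hnr : (0 : ℝ) < n := Nat.cast_pos.2 ((le_max_right N 1).trans hn)
  have h1 := hN n ((le_max_left N 1).trans hn)
  set q := n / (15 * (2 * k)) + 1 with hq
  have hq0 : 0 < q := Nat.succ_pos _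
  have hdiv := Nat.div_add_mod n (15 * (2 * k))
  have hmod := Nat.mod_lt n (show 0 < 15 * (2 * k) by omega)
  have hqn : n ≤ 2 * k * (15 * q) := by
    rw [hq]
    nlinarith
  have hqn' : 2 * k * (15 * q) ≤ n + 15 * (2 * k) := by
    have e : 2 * k * (15 * q) = 15 * (2 * k) * (n / (15 * (2 * k))) + 15 * (2 * k) := by
      rw [hq]; ring
    linarith [Nat.mul_div_le n (15 * (2 * k))]
  have hqr : (n : ℝ) ≤ 2 * k * (15 * q) := by exact_mod_cast hqn
  have hqr' : 2 * k * (15 * (q : ℝ)) ≤ n + 15 * (2 * k) := by exact_mod_cast hqn'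
  have hqpos : (0 : ℝ) < q := Nat.cast_pos.2 hq0
  have h3 : (15 * q : ℝ) ^ d * (oddLead k d + K / (15 * q)) ≤
      (n * (1 / (2 * k : ℝ) + 15 * (n : ℝ)⁻¹)) ^ d * (a + K * (2 * k) * (n : ℝ)⁻¹) := by
    have hb : K / (15 * q) ≤ K * (2 * k) * (n : ℝ)⁻¹ := by
      rw [← div_eq_mul_inv, div_le_div_iff₀ (by positivity) hnr, mul_assoc]
      exact mul_le_mul_of_nonneg_left hqr hK
    have hc : (15 * q : ℝ) ≤ n * (1 / (2 * k : ℝ) + 15 * (n : ℝ)⁻¹) := by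
      rw [mul_add, mul_left_comm, mul_inv_cancel₀ hnr.ne', mul_one_div, mul_one,
        div_add' _ _ _ (by positivity), le_div_iff₀ (by positivity)]
      linarith
    calc _ ≤ (15 * q : ℝ) ^ d * (a + K * (2 * k) * (n : ℝ)⁻¹) := by gcongr
      _ ≤ _ := by gcongr
  refine ((hf q n hq0 hqn).trans h3).trans ?_
  rw [mul_pow, mul_assoc]
  refine (mul_le_mul_of_nonneg_left h1.le (pow_pos hnr d).le).trans (le_of_eq ?_)
  rw [mul_left_comm, mul_div_cancel₀ _ (pow_pos hnr d).ne']

theorem f_125_upper_bound :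
    ∃ c : ℝ, c < 1 ∧ ∀ ε : ℝ, 0 < ε → ∃ N : ℕ, ∀ n : ℕ, N ≤ n →
      (f 125 n : ℝ) ≤ c * (1 + ε) * (n.choose 62) := by
  obtain ⟨N, hN⟩ := exists_forall_f_odd_le (k := 5000) (c := 19 / 20) (by norm_num) (by positivity)
    oddLead_le (by norm_num [Nat.factorial])
  refine ⟨19 / 20, by norm_num, fun ε hε => ⟨N, fun n hn => (hN n hn).trans ?_⟩⟩
  gcongr
  linarith
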